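/- For every constant c₁ ≥ 1 there exists a constant c₆ > 0, depending only on d, K₀, κ, α, ℓ and c₁, with the following property: for every x₀ ∈ ℝ^d, every r ∈ (0,1/2], and every nonnegative function f ∈ C²_b(ℝ^d) such that f(x) = |x−x₀|² for |x−x₀| ≤ r/2, f(x) = r² for |x−x₀| ≥ r, and ‖f‖_∞ ≤ c₁ r², ‖∂f/∂x_i‖_∞ ≤ c₁ r, ‖∂²f/∂x_i∂x_j‖_∞ ≤ c₁ for all 1 ≤ i,j ≤ d, one has ℒf(x) ≤ c₆ r² L(r) for all x ∈ B_r(x₀). -/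

import Mathlib

open MeasureTheory Metric Set Filter
open scoped ENNReal Topology

noncomputable section

/-- `L(r) = ∫_r^1 ℓ(s)/s ds`. -/
def Lfun (ℓ : ℝ → ℝ) (r : ℝ) : ℝ := ∫ s in r..1, ℓ s / s

/-- `ℓ` varies regularly at `0+` with index `ρ`. -/
def RegVaryAt0 (ℓ : ℝ → ℝ) (ρ : ℝ) : Prop :=
  ∀ lam : ℝ, 0 < lam →
    Filter.Tendsto (fun r => ℓ (lam * r) / ℓ r) (𝓝[>] (0 : ℝ)) (𝓝 (lam ^ ρ))

/-- `ℓ` is bounded away from `0` and `∞` on compact subsets of `(0,1)`. -/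
def LocBddAway (ℓ : ℝ → ℝ) : Prop :=
  ∀ a b : ℝ, 0 < a → a ≤ b → b < 1 →
    ∃ m M : ℝ, 0 < m ∧ ∀ s : ℝ, a ≤ s → s ≤ b → m ≤ ℓ s ∧ ℓ s ≤ M

/-- bounded `C²` functions on `ℝ^d`. -/
def C2b (d : ℕ) (f : EuclideanSpace ℝ (Fin d) → ℝ) : Prop :=
  ContDiff ℝ 2 f ∧
    ∃ C : ℝ, ∀ x, |f x| ≤ C ∧ ‖fderiv ℝ f x‖ ≤ C ∧ ‖fderiv ℝ (fderiv ℝ f) x‖ ≤ C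

/-- the integro-differential operator `ℒ`. -/
def opL (d : ℕ) (K : EuclideanSpace ℝ (Fin d) → EuclideanSpace ℝ (Fin d) → ℝ)
    (f : EuclideanSpace ℝ (Fin d) → ℝ) (x : EuclideanSpace ℝ (Fin d)) : ℝ :=
  ∫ h in ({0}ᶜ : Set (EuclideanSpace ℝ (Fin d))),
    (f (x + h) - f x - (if ‖h‖ < 1 then fderiv ℝ f x h else 0)) * K x h

/-- the exit time `τ_B = inf {t > 0 : X_t ∉ B}`, valued in `ℝ≥0∞`. -/
def exitT {Ω : Type*} {d : ℕ} (X : ℝ → Ω → EuclideanSpace ℝ (Fin d))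
    (B : Set (EuclideanSpace ℝ (Fin d))) (ω : Ω) : ℝ≥0∞ :=
  sInf {t : ℝ≥0∞ | 0 < t ∧ t ≠ ∞ ∧ X t.toReal ω ∉ B}

/-- the hitting time `T_A = inf {t > 0 : X_t ∈ A}`, valued in `ℝ≥0∞`. -/
def hitT {Ω : Type*} {d : ℕ} (X : ℝ → Ω → EuclideanSpace ℝ (Fin d))
    (A : Set (EuclideanSpace ℝ (Fin d))) (ω : Ω) : ℝ≥0∞ :=
  sInf {t : ℝ≥0∞ | 0 < t ∧ t ≠ ∞ ∧ X t.toReal ω ∈ A}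

/-- conditions (K1)-(K3) on the kernel `K`: measurability, nonnegativity,
`sup_x ∫ (1 ∧ |h|²) K(x,h) dh ≤ K₀`, symmetry, and the bounds
`κ⁻¹ ℓ(|h|)|h|^{-d} ≤ K(x,h) ≤ κ ℓ(|h|)|h|^{-d}` for `0 < |h| ≤ 1`. -/
def KernelConds (d : ℕ) (K₀ κ : ℝ) (ℓ : ℝ → ℝ)
    (K : EuclideanSpace ℝ (Fin d) → EuclideanSpace ℝ (Fin d) → ℝ) : Prop :=
  Measurable (Function.uncurry K) ∧ (∀ x h, 0 ≤ K x h) ∧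
  (∀ x, (∫⁻ h in ({0}ᶜ : Set (EuclideanSpace ℝ (Fin d))),
      ENNReal.ofReal (min 1 (‖h‖ ^ 2) * K x h)) ≤ ENNReal.ofReal K₀) ∧
  (∀ x h, K x h = K x (-h)) ∧
  (∀ x h, 0 < ‖h‖ → ‖h‖ ≤ 1 →
    κ⁻¹ * (ℓ ‖h‖ / ‖h‖ ^ d) ≤ K x h ∧ K x h ≤ κ * (ℓ ‖h‖ / ‖h‖ ^ d))


lemma ii_sub {g : ℝ → ℝ} {a b c e : ℝ} (h : IntervalIntegrable g volume a b) (hab : a ≤ b)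
    (h1 : a ≤ c) (h2 : c ≤ e) (h3 : e ≤ b) : IntervalIntegrable g volume c e := by
  apply h.mono_set
  rw [uIcc_of_le hab, uIcc_of_le h2]
  exact Icc_subset_Icc h1 h3

lemma u_int {ℓ : ℝ → ℝ} (H : IntervalIntegrable (fun s => s * ℓ s) volume 0 1)
    {a b : ℝ} (ha : 0 < a) (hab : a ≤ b) (hb : b ≤ 1) :
    IntervalIntegrable (fun s => ℓ s / s) volume a b := by
  have h1 : IntervalIntegrable (fun s => s * ℓ s) volume a b :=
    ii_sub H zero_le_one ha.le hab hb
  have h2 : ContinuousOn (fun s : ℝ => (s ^ 2)⁻¹) (uIcc a b) := by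
    rw [uIcc_of_le hab]
    apply ContinuousOn.inv₀ (by fun_prop)
    intro x hx
    have : 0 < x := ha.trans_le hx.1
    positivity
  refine (h1.mul_continuousOn h2).congr ?_
  intro x hx
  rw [uIoc_of_le hab] at hx
  have : x ≠ 0 := (ha.trans hx.1).ne'
  simp only
  field_simp

lemma L_mono {ℓ : ℝ → ℝ} (hℓpos : ∀ s : ℝ, 0 < s → s < 1 → 0 < ℓ s)
    (H : IntervalIntegrable (fun s => s * ℓ s) volume 0 1)
    {a b : ℝ} (ha : 0 < a) (hab : a ≤ b) (hb : b ≤ 1) :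
    ∫ s in a..b, ℓ s / s ≤ Lfun ℓ a := by
  unfold Lfun
  rw [← intervalIntegral.integral_add_adjacent_intervals (u_int H ha hab hb)
    (u_int H (ha.trans_le hab) hb le_rfl)]
  have := intervalIntegral.integral_mono_on_of_le_Ioo (f := fun _ => (0:ℝ)) hb (by simp)
    (u_int H (ha.trans_le hab) hb le_rfl) (fun x hx => by
      have h0 : 0 < x := ha.trans (hab.trans_lt hx.1)
      exact (div_pos (hℓpos x h0 hx.2) h0).le)
  simp at this
  linarith

lemma L_anti {ℓ : ℝ → ℝ} (hℓpos : ∀ s : ℝ, 0 < s → s < 1 → 0 < ℓ s)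
    (H : IntervalIntegrable (fun s => s * ℓ s) volume 0 1)
    {a b : ℝ} (ha : 0 < a) (hab : a ≤ b) (hb : b ≤ 1) :
    Lfun ℓ b ≤ Lfun ℓ a := by
  unfold Lfun
  rw [← intervalIntegral.integral_add_adjacent_intervals (u_int H ha hab hb)
    (u_int H (ha.trans_le hab) hb le_rfl)]
  have := intervalIntegral.integral_mono_on_of_le_Ioo (f := fun _ => (0:ℝ)) hab (by simp)
    (u_int H ha hab hb) (fun x hx => by
      have h0 : 0 < x := ha.trans hx.1
      exact (div_pos (hℓpos x h0 (hx.2.trans_le hb)) h0).le)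
  simp at this
  linarith

lemma L_pos {ℓ : ℝ → ℝ} (hℓpos : ∀ s : ℝ, 0 < s → s < 1 → 0 < ℓ s)
    (H : IntervalIntegrable (fun s => s * ℓ s) volume 0 1) : 0 < Lfun ℓ (1/2) := by
  unfold Lfun
  apply intervalIntegral.intervalIntegral_pos_of_pos_on
    (u_int H (by norm_num) (by norm_num) le_rfl) _ (by norm_num)
  intro x hx
  have h0 : 0 < x := lt_trans (by norm_num) hx.1
  exact (div_pos (hℓpos x h0 hx.2) h0)

lemma karamata {ℓ : ℝ → ℝ} {α : ℝ} (hα₂ : α < 2)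
    (hℓpos : ∀ s : ℝ, 0 < s → s < 1 → 0 < ℓ s) (hℓreg : RegVaryAt0 ℓ (-α))
    (H : IntervalIntegrable (fun s => s * ℓ s) volume 0 1) :
    ∃ C : ℝ, 0 < C ∧ ∀ r, 0 < r → r ≤ 1 / 2 →
      ∫ s in (0:ℝ)..r, s * ℓ s ≤ C * r ^ 2 * Lfun ℓ r := by
  have h4 : ((1/2 : ℝ)) ^ (-α) < 4 := by
    rw [one_div, Real.inv_rpow (by norm_num), Real.rpow_neg (by norm_num), inv_inv]
    calc (2:ℝ) ^ α < 2 ^ (2:ℝ) := Real.rpow_lt_rpow_of_exponent_lt (by norm_num) hα₂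
      _ = 4 := by norm_num
  obtain ⟨b, hb1, hb4⟩ := exists_between h4
  have hb0 : 0 < b := lt_trans (Real.rpow_pos_of_pos (by norm_num) _) hb1
  have hev := (hℓreg (1/2) (by norm_num)).eventually_lt_const hb1
  rw [eventually_nhdsWithin_iff, Metric.eventually_nhds_iff] at hev
  obtain ⟨s₀, hs₀, hev⟩ := hev
  set t := min s₀ 1 with ht
  have ht0 : 0 < t := lt_min hs₀ one_pos
  have ht1 : t ≤ 1 := min_le_right _ _
  have key : ∀ s, 0 < s → s < t → ℓ (1/2 * s) ≤ b * ℓ s := by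
    intro s h0 h1
    have h2 := hev (y := s) (by
      rw [Real.dist_eq, sub_zero, abs_of_pos h0]; exact h1.trans_le (min_le_left _ _)) h0
    rw [div_lt_iff₀ (hℓpos s h0 (h1.trans_le ht1))] at h2
    exact h2.le
  have hFmono : ∀ r, 0 < r → r ≤ 1 → ∫ s in (0:ℝ)..r, s * ℓ s ≤ ∫ s in (0:ℝ)..1, s * ℓ s := by
    intro r h0 h1
    rw [← intervalIntegral.integral_add_adjacent_intervals (a := 0) (b := r) (c := 1)
      (ii_sub H zero_le_one le_rfl h0.le h1) (ii_sub H zero_le_one h0.le h1 le_rfl)]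
    have := intervalIntegral.integral_mono_on_of_le_Ioo (f := fun _ => (0:ℝ)) h1 (by simp)
      (ii_sub H zero_le_one h0.le h1 le_rfl) (fun x hx => by
      have h0 : 0 < x := h0.trans hx.1
      exact (mul_pos h0 (hℓpos x h0 hx.2)).le)
    simp at this
    linarith
  have hFpos : 0 ≤ ∫ s in (0:ℝ)..1, s * ℓ s := by
    have := intervalIntegral.integral_mono_on_of_le_Ioo (f := fun _ => (0:ℝ)) zero_le_one (by simp)
      H (fun x hx => (mul_pos hx.1 (hℓpos x hx.1 hx.2)).le)
    simpa using this

  have small : ∀ r, 0 < r → 2 * r ≤ t →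
      ∫ s in (0:ℝ)..r, s * ℓ s ≤ (b / (1 - b / 4)) * r ^ 2 * Lfun ℓ r := by
    intro r h0 hrt
    have hr1 : r ≤ 1 := by linarith
    have hi : ∀ {x y : ℝ}, 0 ≤ x → x ≤ y → y ≤ 1 →
        IntervalIntegrable (fun s => s * ℓ s) volume x y := fun hx hxy hy =>
      ii_sub H zero_le_one hx hxy hy
    have e1 := intervalIntegral.integral_comp_mul_left (a := 0) (b := r)
      (fun s => s * ℓ s) (c := 1/2) (by norm_num)
    have e1i : IntervalIntegrable (fun s => (1/2 * s) * ℓ (1/2 * s)) volume 0 r := by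
      have := (hi (x := 0) (y := 1/2 * r) le_rfl (by linarith) (by linarith)).comp_mul_left
        (c := 1/2)
      convert this using 1 <;> ring
    have m1 := intervalIntegral.integral_mono_on_of_le_Ioo h0.le e1i
      ((hi le_rfl h0.le hr1).const_mul (b/2)) (fun x hx => by
        have := key x hx.1 (by linarith [hx.2])
        have hx1 := hx.1
        calc 1/2 * x * ℓ (1/2 * x) ≤ 1/2 * x * (b * ℓ x) := by gcongr
          _ = _ := by ring)
    rw [intervalIntegral.integral_const_mul] at m1
    rw [e1] at m1
    simp only [mul_zero, smul_eq_mul] at m1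
    have e2 := intervalIntegral.integral_comp_mul_left (a := r) (b := 2 * r)
      (fun s => ℓ s / s) (c := 1/2) (by norm_num)
    have e2i : IntervalIntegrable (fun s => ℓ (1/2 * s) / (1/2 * s)) volume r (2 * r) := by
      have := (u_int H (a := 1/2 * r) (b := r) (by linarith) (by linarith) hr1).comp_mul_left
        (c := 1/2)
      convert this using 1 <;> ring
    have m2 := intervalIntegral.integral_mono_on_of_le_Ioo (by linarith) e2i
      ((u_int H h0 (b := 2 * r) (by linarith) (by linarith)).const_mul (2*b)) (fun x hx => by
        have hx1 : 0 < x := h0.trans hx.1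
        have := key x hx1 (by linarith [hx.2])
        calc ℓ (1/2 * x) / (1/2 * x) ≤ (b * ℓ x) / (1/2 * x) := by gcongr
          _ = _ := by field_simp)
    rw [intervalIntegral.integral_const_mul, e2] at m2
    rw [show 1/2 * (2 * r) = r by ring] at m2
    simp only [smul_eq_mul] at m2
    have m3 := intervalIntegral.integral_mono_on_of_le_Ioo (by linarith)
      (hi (x := 1/2 * r) (y := r) (by linarith) (by linarith) hr1)
      ((u_int H (a := 1/2 * r) (b := r) (by linarith) (by linarith) hr1).const_mul (r^2))
      (fun x hx => by
        have hx1 : 0 < x := lt_trans (by linarith) hx.1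
        have hx2 := hx.2
        have hl := hℓpos x hx1 (by linarith)
        calc x * ℓ x = x ^ 2 * (ℓ x / x) := by field_simp
          _ ≤ r ^ 2 * (ℓ x / x) := by gcongr)
    rw [intervalIntegral.integral_const_mul] at m3
    have m4 := L_mono hℓpos H h0 (b := 2 * r) (by linarith) (by linarith)
    have ad := intervalIntegral.integral_add_adjacent_intervals
      (hi (x := 0) (y := 1/2 * r) le_rfl (by linarith) (by linarith))
      (hi (x := 1/2 * r) (y := r) (by linarith) (by linarith) hr1)
    have m5 : ∫ s in (1/2 * r)..r, ℓ s / s ≤ b * Lfun ℓ r := by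
      have := mul_le_mul_of_nonneg_left m4 hb0.le
      norm_num at m2
      linarith
    have m6 := mul_le_mul_of_nonneg_left m5 (sq_nonneg r)
    have hq : 0 < 1 - b / 4 := by linarith
    rw [show b / (1 - b / 4) * r ^ 2 * Lfun ℓ r = (r ^ 2 * (b * Lfun ℓ r)) / (1 - b / 4) by ring,
      le_div_iff₀ hq]
    norm_num at m1
    linarith
  set F := ∫ s in (0:ℝ)..1, s * ℓ s
  have hLp := L_pos hℓpos H
  have hq : 0 < 1 - b / 4 := by linarith
  have hA : 0 < b / (1 - b / 4) := by positivity
  have hB : 0 ≤ F / ((t / 2) ^ 2 * Lfun ℓ (1/2)) := by positivity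
  refine ⟨b / (1 - b / 4) + F / ((t / 2) ^ 2 * Lfun ℓ (1/2)), by positivity, ?_⟩
  intro r h0 hr
  have hLr := L_anti hℓpos H h0 hr (by norm_num)
  have hLr0 : 0 < Lfun ℓ r := hLp.trans_le hLr
  by_cases hc : 2 * r ≤ t
  · refine (small r h0 hc).trans ?_
    gcongr
    linarith
  · push Not at hc
    calc ∫ s in (0:ℝ)..r, s * ℓ s ≤ F := hFmono r h0 (by linarith)
      _ = F / ((t / 2) ^ 2 * Lfun ℓ (1/2)) * (t/2) ^ 2 * Lfun ℓ (1/2) := by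
        field_simp
      _ ≤ F / ((t / 2) ^ 2 * Lfun ℓ (1/2)) * r ^ 2 * Lfun ℓ r := by
        gcongr
        linarith
      _ ≤ _ := by gcongr; linarith

lemma taylor_bd {d : ℕ} {f : EuclideanSpace ℝ (Fin d) → ℝ} (hf : ContDiff ℝ 2 f) {c₁ : ℝ}
    (hc : 0 ≤ c₁)
    (h2 : ∀ x (i j : Fin d),
              |fderiv ℝ (fderiv ℝ f) x (EuclideanSpace.single i (1:ℝ))
                  (EuclideanSpace.single j (1:ℝ))| ≤ c₁) (x h : EuclideanSpace ℝ (Fin d)) :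
    |f (x + h) - f x - fderiv ℝ f x h| ≤ (d ^ 2 * c₁) * ‖h‖ ^ 2 := by
  have hdec : ∀ v : EuclideanSpace ℝ (Fin d),
      v = ∑ i, v i • EuclideanSpace.single i (1:ℝ) := by
    intro v
    ext j
    simp [Pi.single_apply]
  have hco : ∀ (v : EuclideanSpace ℝ (Fin d)) i, |v i| ≤ ‖v‖ := fun v i =>
    PiLp.norm_apply_le v i
  have hA : (0:ℝ) ≤ d ^ 2 * c₁ := by positivity
  have hbd : ∀ y, ‖fderiv ℝ (fderiv ℝ f) y‖ ≤ d ^ 2 * c₁ := by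
    intro y
    refine ContinuousLinearMap.opNorm_le_bound _ hA fun v => ?_
    refine ContinuousLinearMap.opNorm_le_bound _ (by positivity) fun w => ?_
    conv_lhs => rw [hdec v, hdec w]
    simp only [map_sum, map_smul, sum_apply, smul_apply,
      smul_eq_mul]
    calc ‖∑ i, w i * ∑ j, v j * fderiv ℝ (fderiv ℝ f) y (EuclideanSpace.single j (1:ℝ))
            (EuclideanSpace.single i (1:ℝ))‖
        ≤ ∑ i : Fin d, ‖w‖ * ∑ j : Fin d, ‖v‖ * c₁ := by
          refine (norm_sum_le _ _).trans (Finset.sum_le_sum fun i _ => ?_)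
          rw [norm_mul]
          refine mul_le_mul (hco w i) ?_ (norm_nonneg _) (norm_nonneg _)
          refine (norm_sum_le _ _).trans (Finset.sum_le_sum fun j _ => ?_)
          rw [norm_mul]
          exact mul_le_mul (hco v j) (h2 _ _ _) (norm_nonneg _) (norm_nonneg _)
      _ = d ^ 2 * c₁ * ‖v‖ * ‖w‖ := by
          simp; ring
  have hd1 : Differentiable ℝ f := hf.differentiable (by norm_num)
  have hd2 : Differentiable ℝ (fderiv ℝ f) :=
    (hf.fderiv_right (m := 1) (by norm_num)).differentiable (by norm_num)
  have := Convex.norm_image_sub_le_of_norm_fderiv_le' (𝕜 := ℝ) (f := f)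
    (s := closedBall x ‖h‖) (φ := fderiv ℝ f x) (C := d ^ 2 * c₁ * ‖h‖) (x := x) (y := x + h)
    (fun z _ => hd1 z) (fun z hz => by
      have h3 := Convex.norm_image_sub_le_of_norm_fderiv_le (𝕜 := ℝ) (f := fderiv ℝ f)
        (fun z _ => hd2 z) (fun z _ => hbd z) convex_univ (mem_univ x) (mem_univ z)
      refine h3.trans ?_
      gcongr
      rwa [mem_closedBall, dist_eq_norm] at hz) (convex_closedBall _ _) (by simp) (by simp)
  rw [add_sub_cancel_left, Real.norm_eq_abs] at this
  linarith

lemma sym_bd {d : ℕ} (hd : 1 ≤ d) {f : EuclideanSpace ℝ (Fin d) → ℝ} (hf : ContDiff ℝ 2 f) {c₁ r : ℝ}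
    (hc : 0 ≤ c₁) (hf0 : ∀ x, 0 ≤ f x) (hfr : ∀ x, |f x| ≤ c₁ * r ^ 2)
    (h2 : ∀ x (i j : Fin d),
              |fderiv ℝ (fderiv ℝ f) x (EuclideanSpace.single i (1:ℝ))
                  (EuclideanSpace.single j (1:ℝ))| ≤ c₁) (x h : EuclideanSpace ℝ (Fin d)) :
    f (x + h) + f (x - h) - 2 * f x ≤ 2 * (d ^ 2 * c₁) * min (r ^ 2) (‖h‖ ^ 2) := by
  have hd' : (1:ℝ) ≤ d ^ 2 := by
    have : (1:ℝ) ≤ d := by exact_mod_cast hd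
    nlinarith
  rcases min_cases (r ^ 2) (‖h‖ ^ 2) with ⟨h1, -⟩ | ⟨h1, -⟩ <;> rw [h1]
  · have a := (abs_le.1 (hfr (x + h))).2
    have b := (abs_le.1 (hfr (x - h))).2
    have c := hf0 x
    have : c₁ * r ^ 2 ≤ d ^ 2 * (c₁ * r ^ 2) := le_mul_of_one_le_left (by positivity) hd'
    linarith
  · have a := (abs_le.1 (taylor_bd hf hc h2 x h)).2
    have b := (abs_le.1 (taylor_bd hf hc h2 x (-h))).2
    rw [map_neg, norm_neg, ← sub_eq_add_neg] at b
    linarith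

lemma opL_le {d : ℕ} (hd : 1 ≤ d) {K₀ κ : ℝ} {ℓ : ℝ → ℝ}
    {K : EuclideanSpace ℝ (Fin d) → EuclideanSpace ℝ (Fin d) → ℝ}
    (hK : KernelConds d K₀ κ ℓ K) {f : EuclideanSpace ℝ (Fin d) → ℝ} (hf : ContDiff ℝ 2 f) {c₁ r : ℝ}
    (hc : 0 ≤ c₁) (hf0 : ∀ x, 0 ≤ f x) (hfr : ∀ x, |f x| ≤ c₁ * r ^ 2)
    (h2 : ∀ x (i j : Fin d),
              |fderiv ℝ (fderiv ℝ f) x (EuclideanSpace.single i (1:ℝ))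
                  (EuclideanSpace.single j (1:ℝ))| ≤ c₁) (x : EuclideanSpace ℝ (Fin d))
    (hint : Integrable (fun h => min (r ^ 2) (‖h‖ ^ 2) * K x h)) :
    opL d K f x ≤ (d ^ 2 * c₁) * ∫ h, min (r ^ 2) (‖h‖ ^ 2) * K x h := by
  obtain ⟨hKm, hK0, hK1, hK2, hK3⟩ := hK
  have : Nonempty (Fin d) := ⟨⟨0, hd⟩⟩
  have hpos : 0 ≤ ∫ h, min (r ^ 2) (‖h‖ ^ 2) * K x h :=
    integral_nonneg fun h => mul_nonneg (by positivity) (hK0 x h)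
  unfold opL
  rw [restrict_compl_singleton]
  set g : EuclideanSpace ℝ (Fin d) → ℝ :=
    fun h => (f (x + h) - f x - (if ‖h‖ < 1 then fderiv ℝ f x h else 0)) * K x h with hg
  by_cases hi : Integrable g
  · have e : ∫ h, g (-h) = ∫ h, g h := integral_neg_eq_self g volume
    have hi' : Integrable (fun h => g (-h)) := hi.comp_neg
    have e2 : ∫ h, (g h + g (-h)) = 2 * ∫ h, g h := by
      rw [integral_add hi hi', e]; ring
    have e3 : ∫ h, (g h + g (-h)) ≤
        ∫ h, 2 * (d ^ 2 * c₁) * (min (r ^ 2) (‖h‖ ^ 2) * K x h) := by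
      refine integral_mono (hi.add hi') (hint.const_mul _) fun h => ?_
      have : g h + g (-h) = (f (x + h) + f (x - h) - 2 * f x) * K x h := by
        simp only [hg, norm_neg, map_neg, ← hK2 x h, ← sub_eq_add_neg]
        split_ifs <;> ring
      simp only [this]
      rw [← mul_assoc]
      exact mul_le_mul_of_nonneg_right (sym_bd hd hf hc hf0 hfr h2 x h) (hK0 x h)
    rw [integral_const_mul] at e3
    linarith
  · rw [integral_undef hi]; positivity

lemma K_int {d : ℕ} (hd : 1 ≤ d) {K₀ κ : ℝ} {ℓ : ℝ → ℝ} (hK₀ : 0 < K₀)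
    {K : EuclideanSpace ℝ (Fin d) → EuclideanSpace ℝ (Fin d) → ℝ}
    (hK : KernelConds d K₀ κ ℓ K) (x : EuclideanSpace ℝ (Fin d)) :
    Integrable (fun h => min 1 (‖h‖ ^ 2) * K x h) ∧ ∫ h, min 1 (‖h‖ ^ 2) * K x h ≤ K₀ := by
  obtain ⟨hKm, hK0, hK1, hK2, hK3⟩ := hK
  have : Nonempty (Fin d) := ⟨⟨0, hd⟩⟩
  have hm : Measurable (fun h => min 1 (‖h‖ ^ 2) * K x h) :=
    (by fun_prop : Measurable fun h : EuclideanSpace ℝ (Fin d) => min 1 (‖h‖ ^ 2)).mul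
      (hKm.comp measurable_prodMk_left)
  have h0 : ∀ h, 0 ≤ min 1 (‖h‖ ^ 2) * K x h := fun h => mul_nonneg (by positivity) (hK0 x h)
  have h1 := hK1 x
  rw [restrict_compl_singleton] at h1
  constructor
  · refine ⟨hm.aestronglyMeasurable, ?_⟩
    rw [hasFiniteIntegral_iff_ofReal (ae_of_all _ h0)]
    exact h1.trans_lt ENNReal.ofReal_lt_top
  · rw [integral_eq_lintegral_of_nonneg_ae (ae_of_all _ h0) hm.aestronglyMeasurable]
    exact ENNReal.toReal_le_of_le_ofReal hK₀.le h1

lemma K_int_r {d : ℕ} (hd : 1 ≤ d) {K₀ κ : ℝ} {ℓ : ℝ → ℝ} (hK₀ : 0 < K₀)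
    {K : EuclideanSpace ℝ (Fin d) → EuclideanSpace ℝ (Fin d) → ℝ}
    (hK : KernelConds d K₀ κ ℓ K) (x : EuclideanSpace ℝ (Fin d)) {r : ℝ} (hr0 : 0 < r)
    (hr : r ≤ 1 / 2) : Integrable (fun h => min (r ^ 2) (‖h‖ ^ 2) * K x h) := by
  have h1 := (K_int hd hK₀ hK x).1
  obtain ⟨hKm, hK0, hK1, hK2, hK3⟩ := hK
  have hm : Measurable (fun h => min (r ^ 2) (‖h‖ ^ 2) * K x h) :=
    (by fun_prop : Measurable fun h : EuclideanSpace ℝ (Fin d) => min (r ^ 2) (‖h‖ ^ 2)).mul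
      (hKm.comp measurable_prodMk_left)
  refine h1.mono' hm.aestronglyMeasurable (ae_of_all _ fun h => ?_)
  rw [Real.norm_of_nonneg (mul_nonneg (by positivity) (hK0 x h))]
  refine mul_le_mul_of_nonneg_right ?_ (hK0 x h)
  exact min_le_min_right _ (by nlinarith)

lemma H_of_K {d : ℕ} (hd : 1 ≤ d) {K₀ κ : ℝ} {ℓ : ℝ → ℝ} (hK₀ : 0 < K₀) (hκ : 1 < κ)
    (hℓmeas : Measurable ℓ) (hℓpos : ∀ s : ℝ, 0 < s → s < 1 → 0 < ℓ s)
    {K : EuclideanSpace ℝ (Fin d) → EuclideanSpace ℝ (Fin d) → ℝ}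
    (hK : KernelConds d K₀ κ ℓ K) :
    IntervalIntegrable (fun s => s * ℓ s) volume 0 1 := by
  have h1 := (K_int hd hK₀ hK 0).1
  obtain ⟨hKm, hK0, hK1, hK2, hK3⟩ := hK
  have : Nonempty (Fin d) := ⟨⟨0, hd⟩⟩
  have h2 : IntegrableOn (fun h : EuclideanSpace ℝ (Fin d) =>
      (fun s => s ^ 2 * (ℓ s / s ^ d)) ‖h‖) (ball 0 1) := by
    refine ((h1.const_mul κ).integrableOn (s := ball 0 1)).mono' ?_ ?_
    · refine Measurable.aestronglyMeasurable ?_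
      fun_prop
    · rw [ae_restrict_iff' measurableSet_ball]
      refine ae_of_all _ fun h hh => ?_
      rw [mem_ball_zero_iff] at hh
      rcases (norm_nonneg h).eq_or_lt with h0 | h0
      · have := hK0 0 h
        simp only [← h0]
        simp
      have hl := hℓpos _ h0 hh
      have h3 := (hK3 0 h h0 hh.le).1
      rw [Real.norm_of_nonneg (by positivity), min_eq_right (by nlinarith)]
      rw [inv_mul_le_iff₀ (by linarith)] at h3
      calc ‖h‖ ^ 2 * (ℓ ‖h‖ / ‖h‖ ^ d) ≤ ‖h‖ ^ 2 * (κ * K 0 h) := by gcongr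
        _ = _ := by ring
  rw [integrableOn_fun_norm_addHaar volume (f := fun s => s ^ 2 * (ℓ s / s ^ d))] at h2
  rw [intervalIntegrable_iff_integrableOn_Ioo_of_le zero_le_one]
  refine h2.congr_fun ?_ measurableSet_Ioo
  intro s hs
  have hs0 : s ≠ 0 := hs.1.ne'
  obtain ⟨n, rfl⟩ : ∃ n, d = n + 1 := ⟨d - 1, by omega⟩
  simp
  field_simp
  ring

/-- The polar integral of the truncated kernel. -/
lemma polar_le {d : ℕ} (hd : 1 ≤ d) {K₀ κ : ℝ} {ℓ : ℝ → ℝ} (hK₀ : 0 < K₀) (hκ : 1 < κ)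
    (hℓmeas : Measurable ℓ) (hℓpos : ∀ s : ℝ, 0 < s → s < 1 → 0 < ℓ s)
    {K : EuclideanSpace ℝ (Fin d) → EuclideanSpace ℝ (Fin d) → ℝ}
    (hK : KernelConds d K₀ κ ℓ K) (H : IntervalIntegrable (fun s => s * ℓ s) volume 0 1)
    (x : EuclideanSpace ℝ (Fin d)) {r : ℝ} (hr0 : 0 < r) (hr : r ≤ 1 / 2) :
    ∫ h, min (r ^ 2) (‖h‖ ^ 2) * K x h ≤
      r ^ 2 * K₀ + κ * (d * (volume.real (ball (0 : EuclideanSpace ℝ (Fin d)) 1) *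
        ((∫ s in (0:ℝ)..r, s * ℓ s) + r ^ 2 * Lfun ℓ r))) := by
  have hiK := K_int hd hK₀ hK x
  have hir := K_int_r hd hK₀ hK x hr0 hr
  obtain ⟨hKm, hK0, hK1, hK2, hK3⟩ := hK
  have : Nonempty (Fin d) := ⟨⟨0, hd⟩⟩
  -- the radial profile
  set φ : ℝ → ℝ := (Ioo (0:ℝ) 1).indicator (fun s => min (r ^ 2) (s ^ 2) * (ℓ s / s ^ d)) with hφ
  have hcong : ∀ s ∈ Ioi (0:ℝ), s ^ (d - 1) * φ s =
      (Ioo (0:ℝ) 1).indicator (fun s => min (r ^ 2) (s ^ 2) * (ℓ s / s)) s := by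
    intro s hs
    have hs0 : s ≠ 0 := (mem_Ioi.1 hs).ne'
    by_cases h : s ∈ Ioo (0:ℝ) 1
    · simp only [hφ, indicator_of_mem h]
      obtain ⟨n, rfl⟩ : ∃ n, d = n + 1 := ⟨d - 1, by omega⟩
      simp
      field_simp
      ring
    · simp [hφ, indicator_of_notMem h]
  have hψA : IntervalIntegrable (fun s => min (r ^ 2) (s ^ 2) * (ℓ s / s)) volume 0 r := by
    refine (ii_sub H zero_le_one le_rfl hr0.le (by linarith)).congr ?_
    intro s hs
    rw [uIoc_of_le hr0.le] at hs
    have h1 := hs.1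
    have h2 := hs.2
    simp only
    rw [min_eq_right (by gcongr)]
    field_simp
  have hψeqA : ∫ s in (0:ℝ)..r, min (r ^ 2) (s ^ 2) * (ℓ s / s) = ∫ s in (0:ℝ)..r, s * ℓ s := by
    refine intervalIntegral.integral_congr fun s hs => ?_
    rw [uIcc_of_le hr0.le] at hs
    have h1 := hs.1
    have h2 := hs.2
    show min (r ^ 2) (s ^ 2) * (ℓ s / s) = _
    rw [min_eq_right (by gcongr)]
    rcases h1.eq_or_lt with h | h
    · simp [← h]
    · field_simp
  have hψB : IntervalIntegrable (fun s => min (r ^ 2) (s ^ 2) * (ℓ s / s)) volume r 1 := by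
    refine ((u_int H hr0 (by linarith) le_rfl).const_mul (r ^ 2)).congr ?_
    intro s hs
    rw [uIoc_of_le (by linarith)] at hs
    have h1 := hs.1
    simp only
    rw [min_eq_left (by gcongr)]
  have hψeqB : ∫ s in r..1, min (r ^ 2) (s ^ 2) * (ℓ s / s) = r ^ 2 * Lfun ℓ r := by
    unfold Lfun
    rw [← intervalIntegral.integral_const_mul]
    refine intervalIntegral.integral_congr fun s hs => ?_
    rw [uIcc_of_le (by linarith)] at hs
    have h1 := hs.1
    show min (r ^ 2) (s ^ 2) * (ℓ s / s) = _
    rw [min_eq_left (by gcongr)]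
  have hψ := hψA.trans hψB
  have hfin : Module.finrank ℝ (EuclideanSpace ℝ (Fin d)) = d := by simp
  have hφi : Integrable (fun h : EuclideanSpace ℝ (Fin d) => φ ‖h‖) := by
    rw [integrable_fun_norm_addHaar volume (f := φ), hfin]
    simp only [smul_eq_mul]
    rw [integrableOn_congr_fun hcong measurableSet_Ioi]
    rw [intervalIntegrable_iff_integrableOn_Ioo_of_le zero_le_one] at hψ
    exact ((integrable_indicator_iff measurableSet_Ioo).2 hψ).integrableOn
  have hφe : ∫ h : EuclideanSpace ℝ (Fin d), φ ‖h‖ =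
      d * (volume.real (ball (0 : EuclideanSpace ℝ (Fin d)) 1) *
        ((∫ s in (0:ℝ)..r, s * ℓ s) + r ^ 2 * Lfun ℓ r)) := by
    rw [integral_fun_norm_addHaar volume φ, hfin]
    simp only [smul_eq_mul, nsmul_eq_mul]
    rw [setIntegral_congr_fun measurableSet_Ioi hcong, setIntegral_indicator measurableSet_Ioo,
      inter_eq_self_of_subset_right (fun s hs => hs.1), ← integral_Ioc_eq_integral_Ioo,
      ← intervalIntegral.integral_of_le zero_le_one,
      ← intervalIntegral.integral_add_adjacent_intervals hψA hψB, hψeqA, hψeqB]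
  calc ∫ h, min (r ^ 2) (‖h‖ ^ 2) * K x h
      ≤ ∫ h, (r ^ 2 * (min 1 (‖h‖ ^ 2) * K x h) + κ * φ ‖h‖) := by
        refine integral_mono_ae hir ((hiK.1.const_mul _).add (hφi.const_mul κ)) ?_
        have hne : ∀ᵐ h : EuclideanSpace ℝ (Fin d), h ≠ 0 := by
          simp [ae_iff]
        filter_upwards [hne] with h hh
        have h0 : 0 < ‖h‖ := norm_pos_iff.2 hh
        have hk := hK0 x h
        by_cases h1 : ‖h‖ < 1
        · have : φ ‖h‖ = min (r ^ 2) (‖h‖ ^ 2) * (ℓ ‖h‖ / ‖h‖ ^ d) :=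
            indicator_of_mem (show ‖h‖ ∈ Ioo (0:ℝ) 1 from ⟨h0, h1⟩) _
          simp only [this]
          have h3 := (hK3 x h h0 h1.le).2
          calc min (r ^ 2) (‖h‖ ^ 2) * K x h
              ≤ min (r ^ 2) (‖h‖ ^ 2) * (κ * (ℓ ‖h‖ / ‖h‖ ^ d)) := by gcongr
            _ = κ * (min (r ^ 2) (‖h‖ ^ 2) * (ℓ ‖h‖ / ‖h‖ ^ d)) := by ring
            _ ≤ _ := le_add_of_nonneg_left (by positivity)
        · have : φ ‖h‖ = 0 := indicator_of_notMem (fun hm => h1 hm.2) _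
          simp only [this]
          push Not at h1
          rw [min_eq_left (by nlinarith : (1:ℝ) ≤ ‖h‖ ^ 2), one_mul, mul_zero, add_zero]
          gcongr
          exact min_le_left _ _
    _ = r ^ 2 * (∫ h, min 1 (‖h‖ ^ 2) * K x h) + κ * ∫ h : EuclideanSpace ℝ (Fin d), φ ‖h‖ := by
        rw [integral_add (hiK.1.const_mul _) (hφi.const_mul κ), integral_const_mul,
          integral_const_mul]
    _ ≤ _ := by
        rw [hφe]
        gcongr
        exact hiK.2

/-- For every `c₁ ≥ 1` there exists `c₆ > 0`, depending only on
`d, K₀, κ, α, ℓ, c₁`, such that: for every `x₀`, every `r ∈ (0,1/2]` and every nonnegative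
`f ∈ C²_b` with `f(x) = |x-x₀|²` for `|x-x₀| ≤ r/2`, `f(x) = r²` for `|x-x₀| ≥ r`, and
`‖f‖_∞ ≤ c₁ r²`, `‖∂f/∂xᵢ‖_∞ ≤ c₁ r`, `‖∂²f/∂xᵢ∂xⱼ‖_∞ ≤ c₁`, one has
`ℒf(x) ≤ c₆ r² L(r)` on `B_r(x₀)`. -/
theorem statement9 (d : ℕ) (hd : 1 ≤ d) (K₀ κ α : ℝ) (hK₀ : 0 < K₀) (hκ : 1 < κ)
    (hα₀ : 0 ≤ α) (hα₂ : α < 2) (ℓ : ℝ → ℝ) (hℓmeas : Measurable ℓ)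
    (hℓpos : ∀ s : ℝ, 0 < s → s < 1 → 0 < ℓ s)
    (hℓbdd : LocBddAway ℓ) (hℓreg : RegVaryAt0 ℓ (-α))
    (c₁ : ℝ) (hc₁ : 1 ≤ c₁) :
    ∃ c₆ : ℝ, 0 < c₆ ∧
      ∀ K : EuclideanSpace ℝ (Fin d) → EuclideanSpace ℝ (Fin d) → ℝ,
        KernelConds d K₀ κ ℓ K →
        ∀ (x₀ : EuclideanSpace ℝ (Fin d)) (r : ℝ), 0 < r → r ≤ 1 / 2 →
          ∀ f : EuclideanSpace ℝ (Fin d) → ℝ, C2b d f → (∀ x, 0 ≤ f x) →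
            (∀ x, ‖x - x₀‖ ≤ r / 2 → f x = ‖x - x₀‖ ^ 2) →
            (∀ x, r ≤ ‖x - x₀‖ → f x = r ^ 2) →
            (∀ x, |f x| ≤ c₁ * r ^ 2) →
            (∀ x (i : Fin d),
              |fderiv ℝ f x (EuclideanSpace.single i (1:ℝ))| ≤ c₁ * r) →
            (∀ x (i j : Fin d),
              |fderiv ℝ (fderiv ℝ f) x (EuclideanSpace.single i (1:ℝ))
                  (EuclideanSpace.single j (1:ℝ))| ≤ c₁) →
            ∀ x ∈ Metric.ball x₀ r, opL d K f x ≤ c₆ * r ^ 2 * Lfun ℓ r := by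
  by_cases hex : ∃ K, KernelConds d K₀ κ ℓ K
  swap
  · exact ⟨1, one_pos, fun K hK => (hex ⟨K, hK⟩).elim⟩
  obtain ⟨K', hK'⟩ := hex
  have H := H_of_K hd hK₀ hκ hℓmeas hℓpos hK'
  obtain ⟨C, hC, hkar⟩ := karamata hα₂ hℓpos hℓreg H
  have hLp := L_pos hℓpos H
  have hv : 0 ≤ volume.real (ball (0 : EuclideanSpace ℝ (Fin d)) 1) := measureReal_nonneg
  set V := volume.real (ball (0 : EuclideanSpace ℝ (Fin d)) 1) with hV
  have hd0 : (0:ℝ) < d := by exact_mod_cast hd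
  have hκ0 : 0 < κ := by linarith
  have hc0 : 0 < c₁ := by linarith
  refine ⟨(d ^ 2 * c₁) * (K₀ / Lfun ℓ (1/2) + κ * (d * (V * (C + 1)))), by positivity, ?_⟩
  intro K hK x₀ r hr0 hr f hf hf0 _ _ hfr _ hf2 x _
  have hL := L_anti hℓpos H hr0 hr (by norm_num)
  have h1 := opL_le hd hK hf.1 hc0.le hf0 hfr hf2 x (K_int_r hd hK₀ hK x hr0 hr)
  have h2 := polar_le hd hK₀ hκ hℓmeas hℓpos hK H x hr0 hr
  have h3 := hkar r hr0 hr
  refine h1.trans ?_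
  calc (d ^ 2 * c₁) * ∫ h, min (r ^ 2) (‖h‖ ^ 2) * K x h
      ≤ (d ^ 2 * c₁) * (r ^ 2 * K₀ + κ * (d * (V *
        (C * r ^ 2 * Lfun ℓ r + r ^ 2 * Lfun ℓ r)))) := by
        gcongr
        refine h2.trans ?_
        gcongr
    _ = (d ^ 2 * c₁) * (r ^ 2 * (K₀ / Lfun ℓ (1/2) * Lfun ℓ (1/2)) + κ * (d * (V *
        (C * r ^ 2 * Lfun ℓ r + r ^ 2 * Lfun ℓ r)))) := by
        rw [div_mul_cancel₀ _ hLp.ne']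
    _ ≤ (d ^ 2 * c₁) * (r ^ 2 * (K₀ / Lfun ℓ (1/2) * Lfun ℓ r) + κ * (d * (V *
        (C * r ^ 2 * Lfun ℓ r + r ^ 2 * Lfun ℓ r)))) := by
        gcongr
    _ = _ := by ring
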